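/- Hardness gadget soundness (combinatorial core): consider the set D of votes constructed from an X3C instance with universe size 3m, where for each 3-set S_ℓ = {u_i, u_j, u_k} the vote v_ℓ on candidates c_1,...,c_{6m} equals c_1 ≻ c_2 ≻ ... ≻ c_{6m} with the pairs (c_{2i}, c_{2i+1}), (c_{2j}, c_{2j+1}), (c_{2k}, c_{2k+1}) swapped. Then an election consisting of m distinct votes from D realizes the position matrix X (with X_{p,p} = m−1, X_{2i+1,2i} = X_{2i,2i+1} = 1 for i ∈ [3m], and zero elsewhere) if and only if the corresponding m sets form an exact cover of the universe. -/

import Mathlib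

/-!
Fix positions `p`, `q` and let `u = p / 2`. A vote `w A` puts candidate `q` in position `p` exactly
when either `p = q` and `u ∉ A`, or `p ≠ q` lie in the same pair and `u ∈ A`. Writing `d u` for the
number of sets of `K` containing `u`, the position matrix of the election therefore has `m - d u`
on the diagonal, `d u` at the two off-diagonal entries of the pair of `u`, and `0` elsewhere.
It equals `X` iff `d u = 1` for every `u`, which says that `K` is an exact cover.
-/


/-- X3C hardness gadget soundness (0-indexed). Universe `Fin (3m)`,
candidates `Fin (6m)` where element `u_i` corresponds to the pair of candidates
`2i, 2i+1`. The vote `w A` of a set `A` is the identity order with the pairs of the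
elements of `A` swapped. The matrix `X` has `m − 1` on the diagonal and `1` on the
two off-diagonal entries of each pair. An election consisting of the `m` distinct
votes of a subfamily `K` of the X3C family `F` realizes `X` iff `K` is an exact
cover of the universe. -/
theorem x3c_gadget_soundness (m : ℕ) (hm : 1 ≤ m)
    (F : Finset (Finset (Fin (3 * m)))) (hF : ∀ A ∈ F, A.card = 3)
    (K : Finset (Finset (Fin (3 * m)))) (hKF : K ⊆ F) (hK : K.card = m)
    (w : Finset (Fin (3 * m)) → Equiv.Perm (Fin (6 * m)))
    (hw : ∀ A : Finset (Fin (3 * m)), ∀ p : Fin (6 * m),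
      ((w A p : Fin (6 * m)) : ℕ) =
        if (⟨(p : ℕ) / 2, by have := p.isLt; omega⟩ : Fin (3 * m)) ∈ A
        then 2 * ((p : ℕ) / 2) + (1 - (p : ℕ) % 2)
        else (p : ℕ))
    (X : Fin (6 * m) → Fin (6 * m) → ℕ)
    (hX : ∀ p q : Fin (6 * m), X p q =
      if p = q then m - 1
      else if (p : ℕ) / 2 = (q : ℕ) / 2 then 1 else 0) :
    (∀ p q : Fin (6 * m),
        ((K.val.map w).filter (fun v => v p = q)).card = X p q)
      ↔ (∀ u : Fin (3 * m), ∃! A, A ∈ K ∧ u ∈ A) := by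
  have key : ∀ (A : Finset (Fin (3 * m))) (p q : Fin (6 * m)), w A p = q ↔
      (if p = q then (⟨(p : ℕ) / 2, by have := p.isLt; omega⟩ : Fin (3 * m)) ∉ A
        else (p : ℕ) / 2 = (q : ℕ) / 2 ∧
          (⟨(p : ℕ) / 2, by have := p.isLt; omega⟩ : Fin (3 * m)) ∈ A) := by
    intro A p q
    rw [Fin.ext_iff, hw A p]
    split_ifs with h1 h2 h2 <;> rw [Fin.ext_iff] at h2
    · simp only [h1, not_true_eq_false, iff_false]; omega
    · simp only [h1, and_true]; omega
    · simp only [h1, not_false_eq_true, iff_true]; omega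
    · simp only [h1, and_false, iff_false]; omega
  have count : ∀ p q : Fin (6 * m),
      ((K.val.map w).filter (fun v => v p = q)).card = (K.filter (fun A => w A p = q)).card := by
    intro p q
    rw [Multiset.filter_map, Multiset.card_map]
    rfl
  have cover : ∀ u : Fin (3 * m),
      (∃! A, A ∈ K ∧ u ∈ A) ↔ (K.filter (fun A => u ∈ A)).card = 1 := by
    intro u
    rw [Finset.card_eq_one, Finset.singleton_iff_unique_mem]
    simp only [Finset.mem_filter]
  simp only [cover, count, hX, key]
  constructor
  · intro h u
    -- The entry in row `2u`, column `2u + 1` counts the sets containing `u`.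
    have h1 := h ⟨2 * u, by have := u.isLt; omega⟩ ⟨2 * u + 1, by have := u.isLt; omega⟩
    have e1 : 2 * (u : ℕ) / 2 = u := by omega
    have e2 : (2 * (u : ℕ) + 1) / 2 = u := by omega
    simpa [Fin.ext_iff, e1, e2] using h1
  · intro h p q
    have hu := h ⟨(p : ℕ) / 2, by have := p.isLt; omega⟩
    by_cases hpq : p = q
    · simp only [if_pos hpq]
      have := Finset.card_filter_add_card_filter_not (s := K)
        (fun A => (⟨(p : ℕ) / 2, by have := p.isLt; omega⟩ : Fin (3 * m)) ∈ A)
      omega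
    · by_cases hs : (p : ℕ) / 2 = (q : ℕ) / 2
      · simp only [if_neg hpq, if_pos hs]
        simpa only [hs, true_and] using hu
      · simp [hpq, hs]
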